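/- For all integers n ≥ 0, the number of (4,9)-regular overpartitions satisfies R̄_{4,9}(24n+20) ≡ 0 (mod 216). -/

import Mathlib

/-- Number of partitions of `a` with no part divisible by `ℓ` or `μ`
(the non-overlined parts of an `(ℓ,μ)`-regular overpartition). -/
def regularCount (ℓ μ a : ℕ) : ℕ :=
  Fintype.card {p : a.Partition // ∀ i ∈ p.parts, ¬ ℓ ∣ i ∧ ¬ μ ∣ i}

/-- Number of partitions of `a` into distinct parts with no part divisible by `ℓ` or `μ`
(the overlined parts of an `(ℓ,μ)`-regular overpartition). -/
def regularDistinctCount (ℓ μ a : ℕ) : ℕ :=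
  Fintype.card {p : a.Partition // p.parts.Nodup ∧ ∀ i ∈ p.parts, ¬ ℓ ∣ i ∧ ¬ μ ∣ i}

/-- `Rbar ℓ μ n` is the number of `(ℓ,μ)`-regular overpartitions of `n`: pairs `(λ, δ)`
where `λ` is a partition, `δ` is a partition into distinct parts, `|λ| + |δ| = n`,
and no part of `λ` or `δ` is divisible by `ℓ` or by `μ`. -/
def Rbar (ℓ μ n : ℕ) : ℕ :=
  ∑ ab ∈ Finset.HasAntidiagonal.antidiagonal n, regularCount ℓ μ ab.1 * regularDistinctCount ℓ μ ab.2

open PowerSeries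
open scoped PowerSeries.WithPiTopology

namespace RB

section finite
variable {R : Type*} [CommRing R] (q : R)

def Mf (n : ℕ) : R := ∏ i ∈ Finset.range n, (1 + q ^ (i + 1))
def Lf (n : ℕ) : R := ∏ i ∈ Finset.range n, (1 - q ^ (i + 1))
def Qf (s n : ℕ) : R := ∏ i ∈ Finset.Ico s n, (1 - q ^ (i + 1))
def Tf (n : ℕ) : R := 1 + 2 * ∑ j ∈ Finset.range n, (-1) ^ (j + 1) * q ^ ((j + 1) ^ 2)

lemma Qf_succ_right {s n : ℕ} (h : s ≤ n) : Qf q s (n+1) = Qf q s n * (1 - q ^ (n+1)) := by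
  unfold Qf
  rw [Finset.prod_Ico_succ_top h]

lemma Qf_succ_left {s n : ℕ} (h : s < n) : Qf q s n = (1 - q ^ (s+1)) * Qf q (s+1) n := by
  unfold Qf
  rw [Finset.prod_eq_prod_Ico_succ_bot h]

lemma Mf_succ (n : ℕ) : Mf q (n+1) = Mf q n * (1 + q ^ (n+1)) := by
  unfold Mf
  rw [Finset.prod_range_succ]

lemma gauss_finite (n : ℕ) : Mf q n * Tf q n = Qf q 0 n +
    2 * ∑ k ∈ Finset.range n, (-1) ^ (k+1) * q ^ ((k+1)*(n+1)) * Mf q k * Qf q (k+1) n := by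
  induction n with
  | zero => simp [Mf, Tf, Qf]
  | succ m ih =>
    have hT : Tf q (m+1) = Tf q m + 2 * ((-1)^(m+1) * q ^ ((m+1)^2)) := by
      unfold Tf; rw [Finset.sum_range_succ]; ring
    have hb : ∑ k ∈ Finset.range m, ((-1) ^ (k+1) * q ^ ((k+1)*(m+1+1)) * Mf q k * Qf q (k+1) (m+1)
        - (1 + q^(m+1)) * ((-1) ^ (k+1) * q ^ ((k+1)*(m+1)) * Mf q k * Qf q (k+1) m)) =
        q^(m+1) * Qf q 0 m - (-1)^m * q^((m+1)*(m+1)) * Mf q m := by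
      have := Finset.sum_range_sub' (fun k => (-1 : R)^k * q^((k+1)*(m+1)) * Mf q k * Qf q k m) m
      rw [show q^(m+1) * Qf q 0 m - (-1)^m * q^((m+1)*(m+1)) * Mf q m =
        (fun k => (-1 : R)^k * q^((k+1)*(m+1)) * Mf q k * Qf q k m) 0 -
        (fun k => (-1 : R)^k * q^((k+1)*(m+1)) * Mf q k * Qf q k m) m by simp [Mf, Qf]]
      rw [← this]
      refine Finset.sum_congr rfl fun k hk => ?_
      rw [Finset.mem_range] at hk
      rw [Qf_succ_right q (by omega : k+1 ≤ m), Qf_succ_left q hk, Mf_succ]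
      ring
    rw [Finset.sum_sub_distrib, ← Finset.mul_sum, sub_eq_iff_eq_add] at hb
    rw [Finset.sum_range_succ, hb, hT, Mf_succ, Qf_succ_right q (Nat.zero_le m)]
    have e : Qf q (m+1) (m+1) = 1 := by simp [Qf]
    rw [e]
    linear_combination (1 + q^(m+1)) * ih

lemma gauss_dvd (n : ℕ) : q ^ (n+1) ∣ Mf q n * Tf q n - Lf q n := by
  rw [gauss_finite]
  have : Qf q 0 n = Lf q n := by rw [Qf, Lf, Finset.range_eq_Ico]
  rw [this, add_sub_cancel_left]
  refine Dvd.dvd.mul_left (Finset.dvd_sum fun k _ => ?_) _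
  rw [mul_assoc, mul_assoc]
  refine Dvd.dvd.mul_left (Dvd.dvd.mul_right (pow_dvd_pow _ ?_) _) _
  nlinarith
end finite

noncomputable def θ : ℤ⟦X⟧ := PowerSeries.mk fun n => if n = 0 then 1 else if IsSquare n then 2 * (-1) ^ n else 0

noncomputable def B : ℤ⟦X⟧ := PowerSeries.mk fun n => if n % 3 = 1 ∧ IsSquare n then -(-1) ^ n else 0

noncomputable abbrev S (k : ℕ) [NeZero k] : ℤ⟦X⟧ →ₐ[ℤ] ℤ⟦X⟧ := PowerSeries.expand k (NeZero.ne k)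
noncomputable abbrev N : ℤ⟦X⟧ →+* ℤ⟦X⟧ := PowerSeries.rescale (-1)

lemma coeff_Tf {m n : ℕ} (h : m ≤ n) : coeff m (Tf (X : ℤ⟦X⟧) n) = coeff m θ := by
  have e : ∀ j : ℕ, coeff m ((-1 : ℤ⟦X⟧)^(j+1) * X ^ ((j+1)^2)) = if m = (j+1)^2 then (-1 : ℤ)^(j+1) else 0 := by
    intro j
    have : (-1 : ℤ⟦X⟧)^(j+1) = C ((-1 : ℤ)^(j+1)) := by simp
    rw [this, coeff_C_mul, coeff_X_pow]
    simp
  have e2 : (2 : ℤ⟦X⟧) = C (2:ℤ) := by simp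
  rw [Tf, θ, coeff_mk, map_add, e2, coeff_C_mul, map_sum]
  simp_rw [e]
  rw [coeff_one]
  by_cases h0 : m = 0
  · subst h0
    have : ∀ j : ℕ, (0 = (j+1)^2) = False := by intro j; simpa using (by positivity : (0:ℕ) < (j+1)^2).ne
    simp [this]
  · rw [if_neg h0, if_neg h0, zero_add]
    by_cases hs : IsSquare m
    · rw [if_pos hs]
      obtain ⟨r, rfl⟩ := hs
      have hr : r ≠ 0 := by rintro rfl; simp at h0
      rw [Finset.sum_eq_single (r-1)]
      · rw [Nat.sub_add_cancel (by omega), if_pos (by ring)]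
        congr 1
        rw [pow_mul]
        rcases Nat.even_or_odd r with hr | hr <;> simp [hr]
      · intro b _ hb
        rw [if_neg]
        intro h
        apply hb
        have : r = b+1 := by nlinarith
        omega
      · intro h'
        exfalso
        apply h'
        rw [Finset.mem_range]
        have : r ≤ r * r := Nat.le_mul_self r
        omega
    · rw [if_neg hs, Finset.sum_eq_zero]; rfl
      intro j _
      rw [if_neg]
      rintro rfl
      exact hs ⟨j+1, by ring⟩

lemma multM : Multipliable fun i : ℕ => (1 : ℤ⟦X⟧) + X ^ (i+1) := by
  apply WithPiTopology.multipliable_one_add_of_tendsto_order_atTop_nhds_top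
  refine ENat.tendsto_nhds_top_iff_natCast_lt.mpr (fun n ↦ Filter.eventually_atTop.mpr ⟨n, ?_⟩)
  intro m hm
  rw [order_X_pow]
  norm_cast
  omega

noncomputable def M : ℤ⟦X⟧ := ∏' i : ℕ, (1 + X ^ (i+1))
noncomputable def L : ℤ⟦X⟧ := ∏' i : ℕ, (1 - X ^ (i+1))

lemma hM : HasProd (fun i : ℕ => (1 : ℤ⟦X⟧) + X ^ (i+1)) M := multM.hasProd
lemma hL : HasProd (fun i : ℕ => (1 : ℤ⟦X⟧) - X ^ (i+1)) L := (WithPiTopology.multipliable_one_sub_X_pow ℤ).hasProd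

lemma gauss : M * θ = L := by
  have h1 : Filter.Tendsto (fun n => Mf (X : ℤ⟦X⟧) n) Filter.atTop (nhds M) := hM.tendsto_prod_nat
  have h2 : Filter.Tendsto (fun n => Lf (X : ℤ⟦X⟧) n) Filter.atTop (nhds L) := hL.tendsto_prod_nat
  have h3 : Filter.Tendsto (fun n => Tf (X : ℤ⟦X⟧) n) Filter.atTop (nhds θ) := by
    rw [WithPiTopology.tendsto_iff_coeff_tendsto]
    intro d
    exact tendsto_atTop_of_eventually_const (i₀ := d) fun n hn => coeff_Tf hn
  have h4 : Filter.Tendsto (fun n => Mf (X : ℤ⟦X⟧) n * Tf X n - Lf X n) Filter.atTop (nhds 0) := by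
    rw [WithPiTopology.tendsto_iff_coeff_tendsto]
    intro d
    refine tendsto_atTop_of_eventually_const (i₀ := d) fun n hn => ?_
    have := X_pow_dvd_iff.1 (gauss_dvd (X : ℤ⟦X⟧) n) d (by omega)
    simpa using this
  exact sub_eq_zero.1 (tendsto_nhds_unique ((h1.mul h3).sub h2) h4)

lemma N_cont : Continuous N := by
  rw [continuous_iff_continuousAt]
  intro f
  rw [ContinuousAt, WithPiTopology.tendsto_iff_coeff_tendsto]
  intro d
  simp only [coeff_rescale]
  exact ((WithPiTopology.continuous_coeff ℤ d).tendsto f).const_mul _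

lemma S_cont (k : ℕ) [NeZero k] : Continuous (S k) := by
  rw [continuous_iff_continuousAt]
  intro f
  rw [ContinuousAt, WithPiTopology.tendsto_iff_coeff_tendsto]
  intro d
  simp only [coeff_expand]
  split_ifs
  · exact ((WithPiTopology.continuous_coeff ℤ _).tendsto f)
  · exact tendsto_const_nhds

lemma reindex (k : ℕ) [NeZero k] (g : ℕ → ℤ⟦X⟧) (a : ℤ⟦X⟧) (h : HasProd (fun i => g (k * (i+1))) a) :
    HasProd (fun i => if k ∣ i + 1 then g (i+1) else 1) a := by
  have hk : 0 < k := Nat.pos_of_ne_zero (NeZero.ne k)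
  have inj : Function.Injective (fun i : ℕ => k * (i+1) - 1) := by
    intro i j hij
    have h1 : 0 < k * (i+1) := by positivity
    have h2 : 0 < k * (j+1) := by positivity
    have : k * (i+1) = k * (j+1) := by simp only at hij; omega
    have := Nat.eq_of_mul_eq_mul_left hk this
    omega
  rw [← inj.hasProd_iff]
  · convert h using 2 with i
    have h1 : 0 < k * (i+1) := by positivity
    simp only [Function.comp]
    rw [Nat.sub_add_cancel h1, if_pos (dvd_mul_right _ _)]
  · intro x hx
    rw [if_neg]
    rintro ⟨c, hc⟩
    apply hx
    have : c ≠ 0 := by rintro rfl; simp at hc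
    refine ⟨c - 1, ?_⟩
    simp only
    rw [Nat.sub_add_cancel (by omega)]
    omega

lemma hSM (k : ℕ) [NeZero k] : HasProd (fun i : ℕ => if k ∣ i + 1 then (1 : ℤ⟦X⟧) + X ^ (i+1) else 1) (S k M) := by
  apply reindex k (fun i => 1 + X ^ i)
  convert hM.map (S k) (S_cont k) using 2 with i
  simp [pow_mul]

lemma hSL (k : ℕ) [NeZero k] : HasProd (fun i : ℕ => if k ∣ i + 1 then (1 : ℤ⟦X⟧) - X ^ (i+1) else 1) (S k L) := by
  apply reindex k (fun i => 1 - X ^ i)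
  convert hL.map (S k) (S_cont k) using 2 with i
  simp [pow_mul]

lemma hNM : HasProd (fun i : ℕ => (1 : ℤ⟦X⟧) + (-X) ^ (i+1)) (N M) := by
  convert hM.map N N_cont using 2 with i
  simp

lemma hNL : HasProd (fun i : ℕ => (1 : ℤ⟦X⟧) - (-X) ^ (i+1)) (N L) := by
  convert hL.map N N_cont using 2 with i
  simp

lemma prodLM : L * N L * (S 2 M * S 2 M) = M * N M * (S 2 L * S 2 L) := by
  have h1 := (hL.mul hNL).mul ((hSM 2).mul (hSM 2))
  have h2 := (hM.mul hNM).mul ((hSL 2).mul (hSL 2))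
  refine h1.unique ?_
  convert h2 using 2 with i
  split_ifs with h
  · rw [(even_iff_two_dvd.2 h).neg_pow]; ring
  · rw [(Nat.not_even_iff_odd.1 (fun h' => h (even_iff_two_dvd.1 h'))).neg_pow]; ring

lemma one_coeff_ne {f : ℤ⟦X⟧} (h : constantCoeff f = 1) : f ≠ 0 := by
  rintro rfl
  simp at h

lemma M_ne : M ≠ 0 := by
  have : Filter.Tendsto (fun n => constantCoeff (Mf (X : ℤ⟦X⟧) n)) Filter.atTop (nhds (constantCoeff M)) :=
    ((WithPiTopology.continuous_constantCoeff ℤ).tendsto M).comp hM.tendsto_prod_nat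
  have h2 : ∀ n, constantCoeff (Mf (X : ℤ⟦X⟧) n) = 1 := by intro n; simp [Mf]
  simp only [h2] at this
  exact one_coeff_ne (tendsto_nhds_unique this tendsto_const_nhds)

lemma S_ne (k : ℕ) [NeZero k] {f : ℤ⟦X⟧} (h : f ≠ 0) : S k f ≠ 0 := by
  contrapose! h
  ext n
  have := congrArg (coeff (k * n)) h
  rwa [coeff_expand_mul] at this

lemma N_ne {f : ℤ⟦X⟧} (h : f ≠ 0) : N f ≠ 0 := by
  intro h'
  exact h (rescale_injective (a := (-1 : ℤ)) (by norm_num) (by rw [map_zero]; exact h'))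

lemma theta_mul : θ * N θ = S 2 θ * S 2 θ := by
  have h := prodLM
  rw [← gauss, map_mul, map_mul] at h
  have h1 : M * N M * (S 2 M * S 2 M) ≠ 0 :=
    mul_ne_zero (mul_ne_zero M_ne (N_ne M_ne)) (mul_ne_zero (S_ne 2 M_ne) (S_ne 2 M_ne))
  apply mul_left_cancel₀ h1
  linear_combination h

lemma theta_split : θ = S 9 θ - 2 * B := by
  ext n
  have e2 : (2 : ℤ⟦X⟧) = C (2:ℤ) := by simp
  rw [map_sub, e2, coeff_C_mul, coeff_expand, B, coeff_mk, θ, coeff_mk, coeff_mk]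
  by_cases h9 : 9 ∣ n
  · obtain ⟨m, rfl⟩ := h9
    have hs : IsSquare (9 * m) ↔ IsSquare m := by
      constructor
      · rintro ⟨r, hr⟩
        have : 3 ∣ r * r := by omega
        have : 3 ∣ r := by simpa [Nat.prime_three.dvd_mul] using this
        obtain ⟨c, rfl⟩ := this
        exact ⟨c, by nlinarith⟩
      · rintro ⟨r, rfl⟩
        exact ⟨3 * r, by ring⟩
    have hp : (-1 : ℤ) ^ (9 * m) = (-1) ^ m := by rw [pow_mul]; norm_num
    have h1 : ¬ (9 * m % 3 = 1) := by omega
    simp [hs, hp, h1]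
  · have h0 : n ≠ 0 := by rintro rfl; simp at h9
    rw [if_neg h9, if_neg h0]
    by_cases hs : IsSquare n
    · have : n % 3 = 1 := by
        obtain ⟨r, rfl⟩ := hs
        have : ¬ 3 ∣ r := by
          rintro ⟨c, rfl⟩
          exact h9 ⟨c * c, by ring⟩
        have : r % 3 = 1 ∨ r % 3 = 2 := by omega
        rcases this with h | h <;> simp [Nat.mul_mod, h]
      simp [hs, this]
    · simp [hs]

section alg
variable {R : Type*} [CommRing R]
lemma s0 (V V' U : R) (h1 : V + V' = -2*U^2) (h2 : V*V' = -U) :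
  (1-8*V^3)*(1-8*V'^3) = (1-8*U^3)^2 := by
  obtain rfl : V' = -2*U^2 - V := by linear_combination h1
  grind
lemma s2 (V V' U W : R) (h1 : V + V' = -2*U^2) (h2 : V*V' = -U) :
  (V^2-V*W)*(1-8*V'^3) + (V'^2-V'*W)*(1-8*V^3) = 2*(U*(1+10*U^3-(7+16*U^3)*U*W)) := by
  obtain rfl : V' = -2*U^2 - V := by linear_combination h1
  grind
lemma s3 (V V' U : R) (h1 : V + V' = -2*U^2) (h2 : V*V' = -U) :
  V*(1+10*V^3-(7+16*V^3)*V*U)*(1-8*V'^3)^2 + V'*(1+10*V'^3-(7+16*V'^3)*V'*U)*(1-8*V^3)^2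
    = 2*(18*U^2*(1+U^3)*(1+16*U^3)*(1-8*U^3)) := by
  obtain rfl : V' = -2*U^2 - V := by linear_combination h1
  grind
lemma s4 (V V' U : R) (h1 : V + V' = -2*U^2) (h2 : V*V' = -U) :
  V^2*(1-8*V'^3) - V'^2*(1-8*V^3) = 6*((V + U^2)*2*U^2) := by
  obtain rfl : V' = -2*U^2 - V := by linear_combination h1
  grind
end alg

def Supp (r : ℕ) (f : ℤ⟦X⟧) : Prop := ∀ n, n % 3 ≠ r % 3 → coeff n f = 0

lemma Supp.mul {r s : ℕ} {f g : ℤ⟦X⟧} (hf : Supp r f) (hg : Supp s g) : Supp (r+s) (f*g) := by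
  intro n hn
  rw [coeff_mul]
  refine Finset.sum_eq_zero fun ab hab => ?_
  rw [Finset.HasAntidiagonal.mem_antidiagonal] at hab
  by_cases h : ab.1 % 3 = r % 3
  · rw [hg ab.2 (by omega), mul_zero]
  · rw [hf ab.1 h, zero_mul]

lemma Supp.add {r : ℕ} {f g : ℤ⟦X⟧} (hf : Supp r f) (hg : Supp r g) : Supp r (f+g) := by
  intro n hn
  rw [map_add, hf n hn, hg n hn, add_zero]

lemma Supp.sub {r : ℕ} {f g : ℤ⟦X⟧} (hf : Supp r f) (hg : Supp r g) : Supp r (f-g) := by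
  intro n hn
  rw [map_sub, hf n hn, hg n hn, sub_zero]

lemma Supp.congr {r s : ℕ} {f : ℤ⟦X⟧} (hf : Supp r f) (h : r % 3 = s % 3) : Supp s f := by
  intro n hn
  exact hf n (by omega)

lemma Supp.one : Supp 0 (1 : ℤ⟦X⟧) := by
  intro n hn
  rw [coeff_one, if_neg]
  rintro rfl
  simp at hn

lemma Supp.C (c : ℤ) : Supp 0 (PowerSeries.C c : ℤ⟦X⟧) := by
  intro n hn
  rw [coeff_C, if_neg]
  rintro rfl
  simp at hn

lemma Supp.N {r : ℕ} {f : ℤ⟦X⟧} (hf : Supp r f) : Supp r (N f) := by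
  intro n hn
  rw [coeff_rescale, hf n hn, mul_zero]

lemma Supp.S {r : ℕ} {f : ℤ⟦X⟧} (hf : Supp r f) (k : ℕ) [NeZero k] : Supp (k * r) (S k f) := by
  intro n hn
  rw [coeff_expand]
  split_ifs with h
  · obtain ⟨m, rfl⟩ := h
    rw [Nat.mul_div_cancel_left _ (Nat.pos_of_ne_zero (NeZero.ne k))]
    apply hf
    intro h
    apply hn
    rw [Nat.mul_mod, h, ← Nat.mul_mod]
  · rfl

lemma Supp.S9 (f : ℤ⟦X⟧) : Supp 0 (RB.S 9 f) := by
  intro n hn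
  rw [coeff_expand, if_neg]
  omega

lemma Supp.B : Supp 1 B := by
  intro n hn
  rw [RB.B, coeff_mk, if_neg]
  intro h
  exact hn h.1

lemma Supp.zero {r s : ℕ} {f : ℤ⟦X⟧} (h1 : Supp r f) (h2 : Supp s f) (h : r % 3 ≠ s % 3) : f = 0 := by
  ext n
  by_cases hn : n % 3 = r % 3
  · exact h2 n (by omega)
  · exact h1 n hn

lemma Supp.inv {D J : ℤ⟦X⟧} (hD : Supp 0 D) (hc : constantCoeff D = 1) (h : D * J = 1) : Supp 0 J := by
  intro n
  induction n using Nat.strong_induction_on with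
  | _ n ih =>
    intro hn
    have h1 : coeff n (D * J) = 0 := by rw [h]; exact Supp.one n hn
    rw [coeff_mul, Finset.sum_eq_single (0, n)] at h1
    · simpa [hc] using h1
    · rintro ⟨a, b⟩ hab hne
      rw [Finset.HasAntidiagonal.mem_antidiagonal] at hab
      simp only at hab ⊢
      by_cases ha : a % 3 = 0
      · have : a ≠ 0 := by
          rintro rfl
          apply hne
          simp at hab
          rw [hab]
        rw [ih b (by omega) (by omega), mul_zero]
      · rw [hD a (by simpa using ha), zero_mul]
    · intro h; simp at h

lemma exists_inv {D : ℤ⟦X⟧} (hc : constantCoeff D = 1) : ∃ J, D * J = 1 := by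
  have : IsUnit D := by rw [isUnit_iff_constantCoeff, hc]; exact isUnit_one
  exact this.exists_right_inv

lemma S_S (a b : ℕ) [NeZero a] [NeZero b] [NeZero (a*b)] (f : ℤ⟦X⟧) : S a (S b f) = S (a*b) f :=
  (expand_mul a (NeZero.ne a) b (NeZero.ne b) f).symm

lemma N_S9 (f : ℤ⟦X⟧) : N (S 9 f) = S 9 (N f) := by
  ext n
  rw [coeff_rescale, coeff_expand, coeff_expand]
  split_ifs with h
  · obtain ⟨m, rfl⟩ := h
    rw [coeff_rescale, Nat.mul_div_cancel_left _ (by norm_num), pow_mul]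
    norm_num
  · simp

lemma N_S2 (f : ℤ⟦X⟧) : N (S 2 f) = S 2 f := by
  ext n
  rw [coeff_rescale, coeff_expand]
  split_ifs with h
  · rw [(even_iff_two_dvd.2 h).neg_one_pow, one_mul]
  · simp

lemma even_part {f g : ℤ⟦X⟧} (h : f + N f = 2 * S 2 g) (m : ℕ) : coeff (2*m) f = coeff m g := by
  have h1 := congrArg (coeff (2*m)) h
  have e2 : (2 : ℤ⟦X⟧) = C (2:ℤ) := by simp
  rw [map_add, coeff_rescale, e2, coeff_C_mul, coeff_expand_mul, pow_mul] at h1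
  norm_num at h1
  linarith

lemma odd_part {f g : ℤ⟦X⟧} {c : ℤ} (h : f - N f = C (2*c) * g) {n : ℕ} (hn : Odd n) : c ∣ coeff n f := by
  have h1 := congrArg (coeff n) h
  rw [map_sub, coeff_rescale, coeff_C_mul, hn.neg_one_pow] at h1
  exact ⟨coeff n g, by linarith⟩

lemma thetaC : constantCoeff θ = 1 := by
  rw [← coeff_zero_eq_constantCoeff_apply, θ, coeff_mk]; simp

/-- Existence of the cubic fraction. -/
lemma exists_V : ∃ V i : ℤ⟦X⟧, θ * i = 1 ∧ θ * S 9 i = 1 - 2 * V ∧ Supp 1 V ∧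
    V + N V = -2 * (S 2 V)^2 ∧ V * N V = - S 2 V := by
  obtain ⟨i, hi⟩ := exists_inv thetaC
  have hA : S 9 θ * S 9 i = 1 := by rw [← map_mul, hi, map_one]
  have hA' : N (S 9 θ) * N (S 9 i) = 1 := by rw [← map_mul, hA, map_one]
  have hA2 : S 2 (S 9 θ) * S 2 (S 9 i) = 1 := by rw [← map_mul, hA, map_one]
  have hAA : S 9 θ * N (S 9 θ) = S 2 (S 9 θ) * S 2 (S 9 θ) := by
    rw [N_S9, ← map_mul, theta_mul, map_mul]
    have : S 9 (S 2 θ) = S 2 (S 9 θ) := by rw [S_S, S_S]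
    rw [this]
  have h0 : (S 9 θ - 2 * B) * (N (S 9 θ) - 2 * N B) = (S 2 (S 9 θ) - 2 * S 2 B)^2 := by
    have h := theta_mul
    have hn := congrArg N theta_split
    have hs := congrArg (S 2) theta_split
    rw [map_sub, map_mul, map_ofNat] at hn hs
    rw [← theta_split, ← hn, ← hs, h]
    ring
  generalize hgA : S 9 θ = A at *
  generalize hgi : S 9 i = ai at *
  have sA : Supp 0 A := hgA ▸ Supp.S9 θ
  have sai : Supp 0 ai := hgi ▸ Supp.S9 i
  have sBB : Supp 1 (C 2 * (S 2 B * S 2 B)) := by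
    have h := (Supp.C 2).mul ((Supp.B.S 2).mul (Supp.B.S 2))
    exact h.congr (by norm_num)
  have s1 : Supp 1 (A * N B + N A * B + C 2 * (S 2 B * S 2 B)) :=
    ((sA.mul Supp.B.N).add (sA.N.mul Supp.B)).add sBB
  have sA2 : Supp 0 (S 2 A) := (sA.S 2).congr (by norm_num)
  have sB2 : Supp 2 (S 2 B) := (Supp.B.S 2).congr (by norm_num)
  have s2 : Supp 2 (C 2 * (B * N B + S 2 A * S 2 B)) :=
    ((Supp.C 2).mul ((Supp.B.mul Supp.B.N).add ((sA2.mul sB2).congr (by norm_num)))).congr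
      (by norm_num)
  have e2 : (C (2:ℤ) : ℤ⟦X⟧) = 2 := by simp
  have two : (2 : ℤ⟦X⟧) ≠ 0 := by
    intro h
    have := congrArg (constantCoeff (R := ℤ)) h
    rw [map_ofNat, map_zero] at this
    norm_num at this
  have e : A * N B + N A * B + C 2 * (S 2 B * S 2 B) = C 2 * (B * N B + S 2 A * S 2 B) := by
    rw [e2]
    apply mul_left_cancel₀ two
    linear_combination hAA - h0
  have z1 := Supp.zero s1 (e ▸ s2) (by norm_num)
  have z2 : B * N B + S 2 A * S 2 B = 0 := by
    rw [e, e2] at z1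
    exact (mul_eq_zero.1 z1).resolve_left two
  rw [e2] at z1
  have hai : ai * N ai = S 2 ai * S 2 ai := by
    linear_combination (-(ai * N ai) * (S 2 A * S 2 ai + 1)) * hA2 + (S 2 ai)^2 * (A * ai * hA' + hA) - (ai * N ai * (S 2 ai)^2) * hAA
  refine ⟨B * ai, i, hi, ?_, Supp.B.mul sai, ?_, ?_⟩
  · rw [hgi, theta_split, hgA]
    linear_combination hA
  · rw [map_mul, map_mul]
    linear_combination (ai * N ai) * z1 - 2 * (S 2 B)^2 * hai - B * ai * hA' - N B * N ai * hA
  · rw [map_mul, map_mul]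
    linear_combination (ai * N ai) * z2 - S 2 A * S 2 B * hai - S 2 B * S 2 ai * hA2

lemma main_alg {V GF : ℤ⟦X⟧} (hs : Supp 1 V) (h1 : V + N V = -2 * (S 2 V)^2)
    (h2 : V * N V = - S 2 V) (hGF : GF * (1 - 2 * V) = 1 - 2 * S 4 V) (n : ℕ) :
    (216 : ℤ) ∣ coeff (24 * n + 20) GF := by
  have c0 : constantCoeff V = 0 := by
    rw [← coeff_zero_eq_constantCoeff_apply]
    exact hs 0 (by norm_num)
  obtain ⟨J, hJ⟩ := exists_inv (D := 1 - 8 * V^3) (by simp [c0])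
  have sV3 : Supp 0 (1 - 8 * V^3) := by
    have := Supp.one.sub (((Supp.C 8).mul (hs.mul (hs.mul hs))).congr (s := 0) (by norm_num))
    convert this using 2
    rw [map_ofNat]; ring
  have sJ : Supp 0 J := Supp.inv sV3 (by simp [c0]) hJ
  have hV4 : S 4 V = S 2 (S 2 V) := by rw [S_S]
  have hJ' : (1 - 8 * (N V)^3) * N J = 1 := by
    have := congrArg N hJ
    simpa only [map_mul, map_sub, map_pow, map_one, map_ofNat] using this
  have hJ2 : (1 - 8 * (S 2 V)^3) * S 2 J = 1 := by
    have := congrArg (S 2) hJ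
    simpa only [map_mul, map_sub, map_pow, map_one, map_ofNat] using this
  have hD := s0 V (N V) (S 2 V) h1 h2
  set K1 := (V^2 - V * S 2 (S 2 V)) * J with hK1
  set K2 := V * (1 + 10 * V^3 - (7 + 16 * V^3) * V * S 2 V) * J^2 with hK2
  set K3 := 18 * V^2 * (1 + V^3) * (1 + 16 * V^3) * J^3 with hK3
  have sS : Supp 1 (S 2 (S 2 V)) := ((hs.S 2).S 2).congr (by norm_num)
  have eJ : J = (1 - 8 * (N V)^3) * (S 2 J)^2 := by
    linear_combination (-J * (((1 - 8 * (S 2 V)^3) * S 2 J) + 1)) * hJ2 - J * (S 2 J)^2 * hD + (1 - 8 * (N V)^3) * (S 2 J)^2 * hJ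
  have eJ' : N J = (1 - 8 * V^3) * (S 2 J)^2 := by
    linear_combination (-N J * (((1 - 8 * (S 2 V)^3) * S 2 J) + 1)) * hJ2 - N J * (S 2 J)^2 * hD + (1 - 8 * V^3) * (S 2 J)^2 * hJ'
  -- step 1
  have step1 : coeff (24 * n + 20) GF = 4 * coeff (24 * n + 20) K1 := by
    have e : GF = (1 + C (-8) * (S 2 (S 2 V) * (V * V))) * J + (C 2 * V - C 2 * S 2 (S 2 V)) * J + C 4 * K1 := by
      simp only [hK1, map_neg, map_ofNat]
      rw [hV4] at hGF
      linear_combination (1 + 2 * V + 4 * V^2) * J * hGF - GF * hJ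
    have a1 : Supp 0 ((1 + C (-8) * (S 2 (S 2 V) * (V * V))) * J) :=
      (Supp.one.add (((Supp.C _).mul (sS.mul (hs.mul hs))).congr (by norm_num))).mul sJ
    have a2 : Supp 1 ((C 2 * V - C 2 * S 2 (S 2 V)) * J) :=
      ((((Supp.C 2).mul hs).sub ((Supp.C 2).mul sS)).mul sJ).congr (by norm_num)
    rw [e, map_add, map_add, a1 _ (by omega), a2 _ (by omega), coeff_C_mul]
    ring
  have step2 : coeff (24 * n + 20) K1 = coeff (12 * n + 10) K2 := by
    rw [show 24 * n + 20 = 2 * (12 * n + 10) by ring]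
    apply even_part
    have := s2 V (N V) (S 2 V) (S 2 (S 2 V)) h1 h2
    simp only [hK1, hK2, map_mul, map_sub, map_add, map_pow, map_one, map_ofNat, N_S2]
    linear_combination (V^2 - V * S 2 (S 2 V)) * eJ + ((N V)^2 - N V * S 2 (S 2 V)) * eJ' + (S 2 J)^2 * this
  have step3 : coeff (12 * n + 10) K2 = coeff (6 * n + 5) K3 := by
    rw [show 12 * n + 10 = 2 * (6 * n + 5) by ring]
    apply even_part
    have := s3 V (N V) (S 2 V) h1 h2
    simp only [hK2, hK3, map_mul, map_sub, map_add, map_pow, map_one, map_ofNat, N_S2]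
    linear_combination (V * (1 + 10 * V^3 - (7 + 16 * V^3) * V * S 2 V)) * (J + (1 - 8 * (N V)^3) * (S 2 J)^2) * eJ +
      (N V * (1 + 10 * (N V)^3 - (7 + 16 * (N V)^3) * N V * S 2 V)) * (N J + (1 - 8 * V^3) * (S 2 J)^2) * eJ' +
      (S 2 J)^4 * this + (36 * (S 2 V)^2 * (1 + (S 2 V)^3) * (1 + 16 * (S 2 V)^3) * (S 2 J)^3) * hJ2
  have step4 : (54 : ℤ) ∣ coeff (6 * n + 5) K3 := by
    have := s4 V (N V) (S 2 V) h1 h2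
    have e : K3 = 18 * V^2 * J + C 54 * (V^2 * (11 * V^3 - 16 * V^6) * J^3) := by
      rw [hK3, map_ofNat]
      linear_combination (-18 * V^2 * J) * ((1 - 8 * V^3) * J + 1) * hJ * (-1)
    have o : (54 : ℤ) ∣ coeff (6 * n + 5) (18 * V^2 * J) := by
      apply odd_part (g := (V + (S 2 V)^2) * 2 * (S 2 V)^2 * (S 2 J)^2) (c := 54)
      · have e108 : (C (2 * 54 : ℤ) : ℤ⟦X⟧) = 108 := by norm_num
        rw [e108]
        simp only [map_mul, map_pow, map_ofNat]
        linear_combination 18 * V^2 * eJ - 18 * (N V)^2 * eJ' + 18 * (S 2 J)^2 * this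
      · exact ⟨3 * n + 2, by ring⟩
    rw [e, map_add, coeff_C_mul]
    exact dvd_add o (dvd_mul_right _ _)
  rw [step1, step2, step3]
  omega

abbrev pp (i : ℕ) : Prop := ¬ 4 ∣ i ∧ ¬ 9 ∣ i

noncomputable def Rg : ℤ⟦X⟧ := PowerSeries.mk fun n => (regularCount 4 9 n : ℤ)
noncomputable def Dg : ℤ⟦X⟧ := PowerSeries.mk fun n => (regularDistinctCount 4 9 n : ℤ)

lemma hRg : HasProd (fun i : ℕ ↦ if pp (i + 1) then ∑' j : ℕ, (X : ℤ⟦X⟧) ^ ((i + 1) * j) else 1) Rg := by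
  convert! Nat.Partition.hasProd_powerSeriesMk_card_restricted ℤ pp using 1
  ext n
  rw [Rg, coeff_mk, coeff_mk, regularCount, Fintype.card_subtype]
  rfl

lemma hDg : HasProd (fun i : ℕ ↦ if pp (i + 1) then 1 + (X : ℤ⟦X⟧) ^ (i + 1) else 1) Dg := by
  convert! Nat.Partition.hasProd_genFun (fun i c => if c = 1 ∧ pp i then (1 : ℤ) else 0) using 1
  · ext1 i
    rw [tsum_eq_single 0]
    · by_cases h : pp (i+1)
      · rw [if_pos h, if_pos ⟨rfl, h⟩, PowerSeries.smul_eq_C_mul]; simp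
      · rw [if_neg h, if_neg (fun h' => h h'.2), PowerSeries.smul_eq_C_mul]; simp
    · intro j hj
      rw [if_neg (fun h' => hj (by omega)), PowerSeries.smul_eq_C_mul]; simp
  · ext n
    rw [Dg, coeff_mk, Nat.Partition.coeff_genFun, regularDistinctCount, Fintype.card_subtype, Finset.card_filter]
    push_cast
    refine Finset.sum_congr rfl fun p _ => ?_
    rw [Finsupp.prod, Finset.prod_ite_zero]
    simp only [Finset.prod_const_one]
    congr 1
    simp only [Multiset.toFinsupp_support, Multiset.mem_toFinset, Multiset.toFinsupp_apply, eq_iff_iff]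
    rw [Multiset.nodup_iff_count_eq_one]
    exact ⟨fun h i hi => ⟨h.1 i hi, h.2 i hi⟩, fun h => ⟨fun i hi => (h i hi).1, fun i hi => (h i hi).2⟩⟩

lemma prodD : Dg * (S 4 M * S 9 M) = M * S 36 M := by
  refine (hDg.mul ((hSM 4).mul (hSM 9))).unique ?_
  convert hM.mul (hSM 36) using 2 with i
  have h36 : 36 ∣ i + 1 ↔ 4 ∣ i + 1 ∧ 9 ∣ i + 1 := by omega
  by_cases h4 : 4 ∣ i + 1 <;> by_cases h9 : 9 ∣ i + 1 <;> simp [pp, h36, h4, h9]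

lemma prodR : Rg * (L * S 36 L) = S 4 L * S 9 L := by
  refine (hRg.mul (hL.mul (hSL 36))).unique ?_
  convert (hSL 4).mul (hSL 9) using 2 with i
  have h36 : 36 ∣ i + 1 ↔ 4 ∣ i + 1 ∧ 9 ∣ i + 1 := by omega
  have hg : (∑' j : ℕ, (X : ℤ⟦X⟧) ^ ((i + 1) * j)) * (1 - X ^ (i+1)) = 1 := by
    simp_rw [pow_mul]
    exact WithPiTopology.tsum_pow_mul_one_sub_of_constantCoeff_eq_zero (by simp)
  by_cases h4 : 4 ∣ i + 1 <;> by_cases h9 : 9 ∣ i + 1 <;> simp [pp, h36, h4, h9, hg]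

lemma GF_theta : Rg * Dg * (θ * S 36 θ) = S 4 θ * S 9 θ := by
  have h1 := prodD
  have h2 := prodR
  simp only [← gauss, map_mul] at h2
  have h : M * S 36 M * (S 4 M * S 9 M) ≠ 0 :=
    mul_ne_zero (mul_ne_zero M_ne (S_ne 36 M_ne)) (mul_ne_zero (S_ne 4 M_ne) (S_ne 9 M_ne))
  apply mul_left_cancel₀ h
  linear_combination (S 4 M * S 9 M) * Dg * h2 + (S 4 M * S 9 M * S 4 θ * S 9 θ) * h1

lemma coeff_GF (n : ℕ) : coeff n (Rg * Dg) = (Rbar 4 9 n : ℤ) := by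
  rw [coeff_mul, Rbar]
  push_cast
  simp [Rg, Dg]

lemma main (n : ℕ) : (216 : ℤ) ∣ Rbar 4 9 (24 * n + 20) := by
  obtain ⟨V, i, hi, hV, hs, h1, h2⟩ := exists_V
  rw [← coeff_GF]
  refine main_alg hs h1 h2 ?_ n
  have h9 : S 9 θ * S 9 i = 1 := by rw [← map_mul, hi, map_one]
  have h36 : S 36 θ * S 36 i = 1 := by rw [← map_mul, hi, map_one]
  have h4 : S 4 θ * S 36 i = 1 - 2 * S 4 V := by
    have := congrArg (S 4) hV
    rw [map_mul, S_S, map_sub, map_mul, map_one, map_ofNat (S 4) 2] at this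
    exact this
  have h := GF_theta
  rw [← hV, ← h4]
  linear_combination (S 9 i * S 36 i) * h - Rg * Dg * θ * S 9 i * h36 + S 4 θ * S 36 i * h9

end RB

theorem Rbar_four_nine_24n_20_mod_216 (n : ℕ) :
    Rbar 4 9 (24 * n + 20) ≡ 0 [MOD 216] := by
  rw [Nat.modEq_zero_iff_dvd]
  exact_mod_cast RB.main n
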